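/- arXiv:2506.15586 — 5 statements merged into one kernel-verified Lean document; each statement's English description precedes it below -/
import Mathlib

section
/- For every m ≥ 1, the Cesàro average satisfies the closed form (1/m) Σ_{k=0}^{m−1} ψ_{y,k} = K_yx ψ_x + (1/m) (Σ_{k=0}^{m−1} K_yy^k)(ψ_{y,0} − K_yx ψ_x); moreover, if the operator norm of K_yy is strictly less than 1, then ‖(1/m) Σ_{k=0}^{m−1} ψ_{y,k} − K_yx ψ_x‖ ≤ ‖ψ_{y,0} − K_yx ψ_x‖ / (m (1 − ‖K_yy‖)), and hence the Cesàro averages converge to K_yx ψ_x as m → ∞. -/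
open Matrix Filter

/-- For every `m ≥ 1`, the Cesàro average of the fast Koopman
iterates satisfies the closed form
`(1/m) Σ_{k<m} ψ_{y,k} = K_yx ψ_x + (1/m)(Σ_{k<m} K_yy^k)(ψ_{y,0} − K_yx ψ_x)`;
moreover, if the operator norm of `K_yy` (induced by the Euclidean norm) is
strictly less than `1`, then
`‖(1/m) Σ_{k<m} ψ_{y,k} − K_yx ψ_x‖ ≤ ‖ψ_{y,0} − K_yx ψ_x‖ / (m (1 − ‖K_yy‖))`
and the Cesàro averages converge to `K_yx ψ_x` as `m → ∞`. -/
theorem fast_koopman_cesaro {n p : ℕ}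
    (Kyy : Matrix (Fin n) (Fin n) ℝ) (Kyx : Matrix (Fin n) (Fin p) ℝ)
    (ψx : Fin p → ℝ) (ψy0 : Fin n → ℝ)
    (ψ : ℕ → Fin n → ℝ)
    (h0 : ψ 0 = ψy0)
    (hrec : ∀ k, ψ (k + 1) = Kyy.mulVec (ψ k - Kyx.mulVec ψx) + Kyx.mulVec ψx) :
    (∀ m : ℕ, 1 ≤ m →
      (m : ℝ)⁻¹ • ∑ k ∈ Finset.range m, ψ k =
        Kyx.mulVec ψx +
          (m : ℝ)⁻¹ • (∑ k ∈ Finset.range m, Kyy ^ k).mulVec (ψy0 - Kyx.mulVec ψx)) ∧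
    (‖Matrix.toEuclideanCLM (𝕜 := ℝ) Kyy‖ < 1 →
      (∀ m : ℕ, 1 ≤ m →
        ‖(WithLp.equiv 2 (Fin n → ℝ)).symm
            ((m : ℝ)⁻¹ • ∑ k ∈ Finset.range m, ψ k - Kyx.mulVec ψx)‖ ≤
          ‖(WithLp.equiv 2 (Fin n → ℝ)).symm (ψy0 - Kyx.mulVec ψx)‖ /
            (m * (1 - ‖Matrix.toEuclideanCLM (𝕜 := ℝ) Kyy‖))) ∧
      Tendsto (fun m : ℕ => (m : ℝ)⁻¹ • ∑ k ∈ Finset.range m, ψ k) atTop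
        (nhds (Kyx.mulVec ψx))) := by
  have hE : ∀ k, ψ k = Kyx.mulVec ψx + (Kyy ^ k).mulVec (ψy0 - Kyx.mulVec ψx) := by
    intro k
    induction k with
    | zero => simp [h0]
    | succ k ih =>
      rw [hrec, ih, add_sub_cancel_left, Matrix.mulVec_mulVec, ← pow_succ', add_comm]
  have hC : ∀ m : ℕ, 1 ≤ m →
      (m : ℝ)⁻¹ • ∑ k ∈ Finset.range m, ψ k =
        Kyx.mulVec ψx +
          (m : ℝ)⁻¹ • (∑ k ∈ Finset.range m, Kyy ^ k).mulVec (ψy0 - Kyx.mulVec ψx) := by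
    intro m hm
    have hm0 : (m : ℝ) ≠ 0 := by positivity
    rw [Finset.sum_congr rfl (fun k _ => hE k), Finset.sum_add_distrib, smul_add,
      Finset.sum_const, Finset.card_range, ← Nat.cast_smul_eq_nsmul ℝ, inv_smul_smul₀ hm0,
      Matrix.sum_mulVec]
  refine ⟨hC, fun hlt => ?_⟩
  have hB : ∀ m : ℕ, 1 ≤ m →
        ‖(WithLp.equiv 2 (Fin n → ℝ)).symm
            ((m : ℝ)⁻¹ • ∑ k ∈ Finset.range m, ψ k - Kyx.mulVec ψx)‖ ≤
          ‖(WithLp.equiv 2 (Fin n → ℝ)).symm (ψy0 - Kyx.mulVec ψx)‖ /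
            (m * (1 - ‖Matrix.toEuclideanCLM (𝕜 := ℝ) Kyy‖)) := by
    intro m hm
    have hm0 : (0 : ℝ) < m := by positivity
    rw [hC m hm, add_sub_cancel_left]
    set v := ψy0 - Kyx.mulVec ψx
    set T := Matrix.toEuclideanCLM (𝕜 := ℝ) Kyy with hT
    have h1 : (WithLp.equiv 2 (Fin n → ℝ)).symm
        ((m : ℝ)⁻¹ • (∑ k ∈ Finset.range m, Kyy ^ k).mulVec v) =
        (m : ℝ)⁻¹ • ∑ k ∈ Finset.range m, (T ^ k) ((WithLp.equiv 2 (Fin n → ℝ)).symm v) := by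
      have : ∀ k, (T ^ k) ((WithLp.equiv 2 (Fin n → ℝ)).symm v) =
          WithLp.toLp 2 ((Kyy ^ k).mulVec v) := by
        intro k
        rw [hT, ← map_pow]
        exact Matrix.toEuclideanCLM_toLp _ _
      simp only [this]
      rw [← WithLp.toLp_sum, ← WithLp.toLp_smul, Matrix.sum_mulVec]
      rfl
    have hk : ∀ k, ‖(T ^ k) ((WithLp.equiv 2 (Fin n → ℝ)).symm v)‖ ≤
        ‖T‖ ^ k * ‖(WithLp.equiv 2 (Fin n → ℝ)).symm v‖ := by
      intro k
      induction k with
      | zero => simp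
      | succ k ih =>
        rw [pow_succ', pow_succ', mul_assoc]
        exact (T.le_opNorm _).trans (mul_le_mul_of_nonneg_left ih (norm_nonneg _))
    have hg : ∑ k ∈ Finset.range m, ‖T‖ ^ k ≤ (1 - ‖T‖)⁻¹ := by
      rw [← tsum_geometric_of_lt_one (norm_nonneg T) hlt]
      exact (summable_geometric_of_lt_one (norm_nonneg T) hlt).sum_le_tsum _
        (fun _ _ => by positivity)
    rw [h1, norm_smul, norm_inv, Real.norm_of_nonneg hm0.le]
    calc _ ≤ (m : ℝ)⁻¹ * ((1 - ‖T‖)⁻¹ * ‖(WithLp.equiv 2 (Fin n → ℝ)).symm v‖) := by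
          gcongr
          refine (norm_sum_le _ _).trans ((Finset.sum_le_sum fun k _ => hk k).trans ?_)
          rw [← Finset.sum_mul]
          gcongr
      _ = _ := by
          rw [div_eq_mul_inv, mul_inv]
          ring
  refine ⟨hB, ?_⟩
  have hz : Tendsto (fun m : ℕ => WithLp.toLp 2
      ((m : ℝ)⁻¹ • ∑ k ∈ Finset.range m, ψ k - Kyx.mulVec ψx)) atTop (nhds 0) := by
    refine squeeze_zero_norm' (a := fun m : ℕ =>
      (‖(WithLp.equiv 2 (Fin n → ℝ)).symm (ψy0 - Kyx.mulVec ψx)‖ /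
        (1 - ‖Matrix.toEuclideanCLM (𝕜 := ℝ) Kyy‖)) / (m : ℝ)) ?_
      (tendsto_const_div_atTop_nhds_zero_nat _)
    filter_upwards [eventually_ge_atTop 1] with m hm
    rw [div_div, mul_comm (1 - _)]
    exact hB m hm
  have hz2 := ((PiLp.continuous_ofLp 2 (fun _ : Fin n => ℝ)).tendsto 0).comp hz
  have hz3 := hz2.add_const (Kyx.mulVec ψx)
  simpa [Function.comp_def] using hz3
end

section
/- Assume the operator norm of K_yy is strictly less than 1, and let avg_m = (1/m) Σ_{k=0}^{m−1} ψ_{y,k} denote the Cesàro average of the fast Koopman iterates. Then the slow-scale update converges: lim_{m→∞} [ K_xx (ψ_x − K_xy · avg_m) + K_xy · avg_m ] = K_comb ψ_x, where K_comb = K_xx + (I − K_xx) K_xy K_yx. -/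
open Matrix Filter

/-- Assume the operator norm of `K_yy` (induced by the Euclidean
norm) is strictly less than `1`, and let `avg_m = (1/m) Σ_{k<m} ψ_{y,k}` denote
the Cesàro average of the fast Koopman iterates.  Then the slow-scale update
converges:
`lim_{m→∞} [K_xx (ψ_x − K_xy avg_m) + K_xy avg_m] = K_comb ψ_x`, where
`K_comb = K_xx + (I − K_xx) K_xy K_yx`. -/
theorem slow_scale_update_limit {n p : ℕ}
    (Kyy : Matrix (Fin n) (Fin n) ℝ) (Kyx : Matrix (Fin n) (Fin p) ℝ)
    (Kxx : Matrix (Fin p) (Fin p) ℝ) (Kxy : Matrix (Fin p) (Fin n) ℝ)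
    (ψx : Fin p → ℝ) (ψy0 : Fin n → ℝ)
    (ψ : ℕ → Fin n → ℝ)
    (h0 : ψ 0 = ψy0)
    (hrec : ∀ k, ψ (k + 1) = Kyy.mulVec (ψ k - Kyx.mulVec ψx) + Kyx.mulVec ψx)
    (hK : ‖Matrix.toEuclideanCLM (𝕜 := ℝ) Kyy‖ < 1) :
    Tendsto
      (fun m : ℕ =>
        Kxx.mulVec (ψx - Kxy.mulVec ((m : ℝ)⁻¹ • ∑ k ∈ Finset.range m, ψ k)) +
          Kxy.mulVec ((m : ℝ)⁻¹ • ∑ k ∈ Finset.range m, ψ k))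
      atTop (nhds ((Kxx + (1 - Kxx) * Kxy * Kyx).mulVec ψx)) := by
  set c := Kyx.mulVec ψx with hc
  set T := Matrix.toEuclideanCLM (𝕜 := ℝ) Kyy with hT
  have hpow : ∀ k, WithLp.toLp 2 (ψ k - c) = (T ^ k) (WithLp.toLp 2 (ψ 0 - c)) := by
    intro k
    induction k with
    | zero => simp
    | succ k ih =>
      rw [pow_succ', ContinuousLinearMap.mul_apply, ← ih, hrec k, add_sub_cancel_right, hT,
        Matrix.toEuclideanCLM_toLp]
  have hlim0 : Tendsto (fun k => T ^ k) atTop (nhds 0) :=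
    tendsto_pow_atTop_nhds_zero_of_norm_lt_one hK
  have hlim1 : Tendsto (fun k => WithLp.toLp 2 (ψ k - c)) atTop (nhds 0) := by
    have h := ((ContinuousLinearMap.apply ℝ (EuclideanSpace ℝ (Fin n))
      (WithLp.toLp 2 (ψ 0 - c))).continuous.tendsto 0).comp hlim0
    simp only [map_zero] at h
    exact h.congr (fun k => (hpow k).symm)
  have hlim2 : Tendsto ψ atTop (nhds c) := by
    have h := ((PiLp.continuous_ofLp 2 (fun _ : Fin n => ℝ)).tendsto 0).comp hlim1
    have h' := h.add_const c
    simpa [Function.comp_def] using h'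
  have hces := hlim2.cesaro_smul
  have hcont : Continuous (fun a : Fin n → ℝ =>
      Kxx.mulVec (ψx - Kxy.mulVec a) + Kxy.mulVec a) := by fun_prop
  have h := (hcont.tendsto c).comp hces
  have he : (Kxx + (1 - Kxx) * Kxy * Kyx).mulVec ψx =
      Kxx.mulVec (ψx - Kxy.mulVec c) + Kxy.mulVec c := by
    rw [hc, Matrix.add_mulVec, Matrix.mul_assoc, Matrix.sub_mul, Matrix.sub_mulVec,
      Matrix.mulVec_sub]
    simp only [Matrix.one_mul, Matrix.mulVec_mulVec]
    abel
  rw [he]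
  exact h
end

section
/- If the matrix Q = 2Q_ww + 2K_ywᵀ(I − K_yy)ᵀ P (I − K_yy) K_yw is positive definite, then for every ψ_y ∈ ℝ^{n_y} the function ψ_w ↦ G(ψ_y, ψ_w) has a unique global minimizer over ℝ^{n_w}, and this minimizer equals −F ψ_y − d, where F = Q^{−1} R, d = Q^{−1} q, R = Q_wy + Q_ywᵀ + 2K_ywᵀ(I − K_yy)ᵀ P K_yy, and q = (Q_wu + Q_uwᵀ) ψ_u + c_w + K_ywᵀ(I − K_yy)ᵀ p + [2K_ywᵀ(I − K_yy)ᵀ P (I − K_yy) K_yx + Q_wx + Q_xwᵀ] ψ_x. -/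
open Matrix Filter

noncomputable section

/-- The next-state map
`ψ_y⁺(ψ_y, ψ_w) = K_yy (ψ_y − K_yx ψ_x − K_yw ψ_w) + K_yx ψ_x + K_yw ψ_w`. -/
def nextY {nx ny nw : ℕ}
    (Kyy : Matrix (Fin ny) (Fin ny) ℝ) (Kyx : Matrix (Fin ny) (Fin nx) ℝ)
    (Kyw : Matrix (Fin ny) (Fin nw) ℝ) (ψx : Fin nx → ℝ)
    (py : Fin ny → ℝ) (pw : Fin nw → ℝ) : Fin ny → ℝ :=
  Kyy.mulVec (py - Kyx.mulVec ψx - Kyw.mulVec pw) + Kyx.mulVec ψx + Kyw.mulVec pw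

/-- The Bellman right-hand side
`G(ψ_y, ψ_w) = Σ_{i,j} ψ_iᵀ Q_{ij} ψ_j + Σ_i c_iᵀ ψ_i + c_0 + ψ_y⁺ᵀ P ψ_y⁺ + pᵀ ψ_y⁺`,
where `ψ_y⁺ = ψ_y⁺(ψ_y, ψ_w)` and the variables `x`, `u` are held at `ψ_x`, `ψ_u`. -/
def bellmanG {nx ny nw nu : ℕ}
    (Kyy : Matrix (Fin ny) (Fin ny) ℝ) (Kyx : Matrix (Fin ny) (Fin nx) ℝ)
    (Kyw : Matrix (Fin ny) (Fin nw) ℝ)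
    (Qxx : Matrix (Fin nx) (Fin nx) ℝ) (Qxy : Matrix (Fin nx) (Fin ny) ℝ)
    (Qxw : Matrix (Fin nx) (Fin nw) ℝ) (Qxu : Matrix (Fin nx) (Fin nu) ℝ)
    (Qyx : Matrix (Fin ny) (Fin nx) ℝ) (Qyy : Matrix (Fin ny) (Fin ny) ℝ)
    (Qyw : Matrix (Fin ny) (Fin nw) ℝ) (Qyu : Matrix (Fin ny) (Fin nu) ℝ)
    (Qwx : Matrix (Fin nw) (Fin nx) ℝ) (Qwy : Matrix (Fin nw) (Fin ny) ℝ)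
    (Qww : Matrix (Fin nw) (Fin nw) ℝ) (Qwu : Matrix (Fin nw) (Fin nu) ℝ)
    (Qux : Matrix (Fin nu) (Fin nx) ℝ) (Quy : Matrix (Fin nu) (Fin ny) ℝ)
    (Quw : Matrix (Fin nu) (Fin nw) ℝ) (Quu : Matrix (Fin nu) (Fin nu) ℝ)
    (cx : Fin nx → ℝ) (cy : Fin ny → ℝ) (cw : Fin nw → ℝ) (cu : Fin nu → ℝ)
    (c0 : ℝ) (ψx : Fin nx → ℝ) (ψu : Fin nu → ℝ)
    (P : Matrix (Fin ny) (Fin ny) ℝ) (p : Fin ny → ℝ)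
    (py : Fin ny → ℝ) (pw : Fin nw → ℝ) : ℝ :=
  ψx ⬝ᵥ Qxx.mulVec ψx + ψx ⬝ᵥ Qxy.mulVec py + ψx ⬝ᵥ Qxw.mulVec pw +
    ψx ⬝ᵥ Qxu.mulVec ψu +
  py ⬝ᵥ Qyx.mulVec ψx + py ⬝ᵥ Qyy.mulVec py + py ⬝ᵥ Qyw.mulVec pw +
    py ⬝ᵥ Qyu.mulVec ψu +
  pw ⬝ᵥ Qwx.mulVec ψx + pw ⬝ᵥ Qwy.mulVec py + pw ⬝ᵥ Qww.mulVec pw +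
    pw ⬝ᵥ Qwu.mulVec ψu +
  ψu ⬝ᵥ Qux.mulVec ψx + ψu ⬝ᵥ Quy.mulVec py + ψu ⬝ᵥ Quw.mulVec pw +
    ψu ⬝ᵥ Quu.mulVec ψu +
  cx ⬝ᵥ ψx + cy ⬝ᵥ py + cw ⬝ᵥ pw + cu ⬝ᵥ ψu + c0 +
  nextY Kyy Kyx Kyw ψx py pw ⬝ᵥ P.mulVec (nextY Kyy Kyx Kyw ψx py pw) +
  p ⬝ᵥ nextY Kyy Kyx Kyw ψx py pw

theorem dot_swap_aux {m n : ℕ} (M : Matrix (Fin m) (Fin n) ℝ) (v : Fin m → ℝ) (h : Fin n → ℝ) :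
    v ⬝ᵥ M.mulVec h = h ⬝ᵥ Mᵀ.mulVec v := by
  rw [Matrix.mulVec_transpose, Matrix.dotProduct_mulVec, dotProduct_comm]

theorem nextY_eq_aux {nx ny nw : ℕ}
    (Kyy : Matrix (Fin ny) (Fin ny) ℝ) (Kyx : Matrix (Fin ny) (Fin nx) ℝ)
    (Kyw : Matrix (Fin ny) (Fin nw) ℝ) (ψx : Fin nx → ℝ)
    (py : Fin ny → ℝ) (pw : Fin nw → ℝ) :
    nextY Kyy Kyx Kyw ψx py pw = Kyy.mulVec py + ((1 - Kyy) * Kyx).mulVec ψx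
      + ((1 - Kyy) * Kyw).mulVec pw := by
  simp only [nextY, Matrix.mulVec_sub, Matrix.sub_mul, Matrix.sub_mulVec, Matrix.one_mul,
    Matrix.mulVec_mulVec]
  abel

theorem bellmanG_expand_aux {nx ny nw nu : ℕ}
    (Kyy : Matrix (Fin ny) (Fin ny) ℝ) (Kyx : Matrix (Fin ny) (Fin nx) ℝ)
    (Kyw : Matrix (Fin ny) (Fin nw) ℝ)
    (Qxx : Matrix (Fin nx) (Fin nx) ℝ) (Qxy : Matrix (Fin nx) (Fin ny) ℝ)
    (Qxw : Matrix (Fin nx) (Fin nw) ℝ) (Qxu : Matrix (Fin nx) (Fin nu) ℝ)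
    (Qyx : Matrix (Fin ny) (Fin nx) ℝ) (Qyy : Matrix (Fin ny) (Fin ny) ℝ)
    (Qyw : Matrix (Fin ny) (Fin nw) ℝ) (Qyu : Matrix (Fin ny) (Fin nu) ℝ)
    (Qwx : Matrix (Fin nw) (Fin nx) ℝ) (Qwy : Matrix (Fin nw) (Fin ny) ℝ)
    (Qww : Matrix (Fin nw) (Fin nw) ℝ) (Qwu : Matrix (Fin nw) (Fin nu) ℝ)
    (Qux : Matrix (Fin nu) (Fin nx) ℝ) (Quy : Matrix (Fin nu) (Fin ny) ℝ)
    (Quw : Matrix (Fin nu) (Fin nw) ℝ) (Quu : Matrix (Fin nu) (Fin nu) ℝ)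
    (cx : Fin nx → ℝ) (cy : Fin ny → ℝ) (cw : Fin nw → ℝ) (cu : Fin nu → ℝ)
    (c0 : ℝ) (ψx : Fin nx → ℝ) (ψu : Fin nu → ℝ)
    (P : Matrix (Fin ny) (Fin ny) ℝ) (p : Fin ny → ℝ)
    (hQww : Qww.IsSymm) (hP : P.IsSymm) (py : Fin ny → ℝ) (m h : Fin nw → ℝ) :
    bellmanG Kyy Kyx Kyw Qxx Qxy Qxw Qxu Qyx Qyy Qyw Qyu Qwx Qwy Qww Qwu Qux Quy Quw Quu cx cy cw cu c0 ψx ψu P p py (m + h) = bellmanG Kyy Kyx Kyw Qxx Qxy Qxw Qxu Qyx Qyy Qyw Qyu Qwx Qwy Qww Qwu Qux Quy Quw Quu cx cy cw cu c0 ψx ψu P p py m +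
      h ⬝ᵥ (((2 : ℝ) • Qww + (2 : ℝ) • (Kywᵀ * (1 - Kyy)ᵀ * P * (1 - Kyy) * Kyw)).mulVec m
        + (Qwy + Qywᵀ + (2 : ℝ) • (Kywᵀ * (1 - Kyy)ᵀ * P * Kyy)).mulVec py
        + ((Qwu + Quwᵀ).mulVec ψu + cw + (Kywᵀ * (1 - Kyy)ᵀ).mulVec p +
      ((2 : ℝ) • (Kywᵀ * (1 - Kyy)ᵀ * P * (1 - Kyy) * Kyx) + Qwx + Qxwᵀ).mulVec ψx))
      + (1 / 2) * (h ⬝ᵥ ((2 : ℝ) • Qww +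
      (2 : ℝ) • (Kywᵀ * (1 - Kyy)ᵀ * P * (1 - Kyy) * Kyw)).mulVec h) := by
  have hN : nextY Kyy Kyx Kyw ψx py (m + h) =
      nextY Kyy Kyx Kyw ψx py m + ((1 - Kyy) * Kyw).mulVec h := by
    simp only [nextY_eq_aux, Matrix.mulVec_add]; abel
  have hB : ∀ v : Fin ny → ℝ, ((1 - Kyy) * Kyw).mulVec h ⬝ᵥ v
      = h ⬝ᵥ (Kywᵀ * (1 - Kyy)ᵀ).mulVec v := by
    intro v
    rw [dotProduct_comm, dot_swap_aux, Matrix.transpose_mul]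
  have hB2 : ∀ v : Fin ny → ℝ, v ⬝ᵥ ((1 - Kyy) * Kyw).mulVec h
      = h ⬝ᵥ (Kywᵀ * (1 - Kyy)ᵀ).mulVec v := by
    intro v
    rw [dot_swap_aux, Matrix.transpose_mul]
  have hPs : ∀ v : Fin ny → ℝ, v ⬝ᵥ P.mulVec (((1 - Kyy) * Kyw).mulVec h)
      = h ⬝ᵥ (Kywᵀ * (1 - Kyy)ᵀ).mulVec (P.mulVec v) := by
    intro v
    rw [dot_swap_aux, hP.eq, hB]
  have hws : m ⬝ᵥ Qww.mulVec h = h ⬝ᵥ Qww.mulVec m := by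
    rw [dot_swap_aux, hQww.eq]
  unfold bellmanG
  rw [hN]
  simp only [Matrix.mulVec_add, dotProduct_add, add_dotProduct, hPs, hB, hB2, hws]
  rw [nextY_eq_aux]
  simp only [Matrix.mulVec_add, Matrix.add_mulVec, Matrix.smul_mulVec, dotProduct_add,
    dotProduct_smul, Matrix.mulVec_mulVec, smul_eq_mul, Matrix.mul_assoc,
    dot_swap_aux Qxw ψx h, dot_swap_aux Qyw py h, dot_swap_aux Quw ψu h, dotProduct_comm cw h]
  ring

/-- If `Q = 2Q_ww + 2K_ywᵀ(I − K_yy)ᵀ P (I − K_yy) K_yw` is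
positive definite, then for every `ψ_y` the function `ψ_w ↦ G(ψ_y, ψ_w)` has a
unique global minimizer over `ℝ^{n_w}`, equal to `−F ψ_y − d`, where
`F = Q⁻¹ R`, `d = Q⁻¹ q`, `R = Q_wy + Q_ywᵀ + 2K_ywᵀ(I − K_yy)ᵀ P K_yy`, and
`q = (Q_wu + Q_uwᵀ) ψ_u + c_w + K_ywᵀ(I − K_yy)ᵀ p +
[2K_ywᵀ(I − K_yy)ᵀ P (I − K_yy) K_yx + Q_wx + Q_xwᵀ] ψ_x`. -/
theorem bellman_unique_minimizer {nx ny nw nu : ℕ}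
    (Kyy : Matrix (Fin ny) (Fin ny) ℝ) (Kyx : Matrix (Fin ny) (Fin nx) ℝ)
    (Kyw : Matrix (Fin ny) (Fin nw) ℝ)
    (Qxx : Matrix (Fin nx) (Fin nx) ℝ) (Qxy : Matrix (Fin nx) (Fin ny) ℝ)
    (Qxw : Matrix (Fin nx) (Fin nw) ℝ) (Qxu : Matrix (Fin nx) (Fin nu) ℝ)
    (Qyx : Matrix (Fin ny) (Fin nx) ℝ) (Qyy : Matrix (Fin ny) (Fin ny) ℝ)
    (Qyw : Matrix (Fin ny) (Fin nw) ℝ) (Qyu : Matrix (Fin ny) (Fin nu) ℝ)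
    (Qwx : Matrix (Fin nw) (Fin nx) ℝ) (Qwy : Matrix (Fin nw) (Fin ny) ℝ)
    (Qww : Matrix (Fin nw) (Fin nw) ℝ) (Qwu : Matrix (Fin nw) (Fin nu) ℝ)
    (Qux : Matrix (Fin nu) (Fin nx) ℝ) (Quy : Matrix (Fin nu) (Fin ny) ℝ)
    (Quw : Matrix (Fin nu) (Fin nw) ℝ) (Quu : Matrix (Fin nu) (Fin nu) ℝ)
    (cx : Fin nx → ℝ) (cy : Fin ny → ℝ) (cw : Fin nw → ℝ) (cu : Fin nu → ℝ)
    (c0 : ℝ) (ψx : Fin nx → ℝ) (ψu : Fin nu → ℝ)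
    (P : Matrix (Fin ny) (Fin ny) ℝ) (p : Fin ny → ℝ)
    (hQww : Qww.IsSymm) (hQyy : Qyy.IsSymm) (hP : P.IsSymm)
    (Q : Matrix (Fin nw) (Fin nw) ℝ)
    (hQ : Q = (2 : ℝ) • Qww +
      (2 : ℝ) • (Kywᵀ * (1 - Kyy)ᵀ * P * (1 - Kyy) * Kyw))
    (hQpos : Q.PosDef)
    (F : Matrix (Fin nw) (Fin ny) ℝ)
    (hF : F = Q⁻¹ * (Qwy + Qywᵀ + (2 : ℝ) • (Kywᵀ * (1 - Kyy)ᵀ * P * Kyy)))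
    (q : Fin nw → ℝ)
    (hq : q = (Qwu + Quwᵀ).mulVec ψu + cw + (Kywᵀ * (1 - Kyy)ᵀ).mulVec p +
      ((2 : ℝ) • (Kywᵀ * (1 - Kyy)ᵀ * P * (1 - Kyy) * Kyx) + Qwx + Qxwᵀ).mulVec ψx)
    (d : Fin nw → ℝ) (hd : d = Q⁻¹.mulVec q) :
    ∀ py : Fin ny → ℝ,
      (∀ pw : Fin nw → ℝ,
        bellmanG Kyy Kyx Kyw Qxx Qxy Qxw Qxu Qyx Qyy Qyw Qyu Qwx Qwy Qww Qwu
            Qux Quy Quw Quu cx cy cw cu c0 ψx ψu P p py (-(F.mulVec py) - d) ≤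
          bellmanG Kyy Kyx Kyw Qxx Qxy Qxw Qxu Qyx Qyy Qyw Qyu Qwx Qwy Qww Qwu
            Qux Quy Quw Quu cx cy cw cu c0 ψx ψu P p py pw) ∧
      (∀ pw : Fin nw → ℝ,
        (∀ pw' : Fin nw → ℝ,
          bellmanG Kyy Kyx Kyw Qxx Qxy Qxw Qxu Qyx Qyy Qyw Qyu Qwx Qwy Qww Qwu
              Qux Quy Quw Quu cx cy cw cu c0 ψx ψu P p py pw ≤
            bellmanG Kyy Kyx Kyw Qxx Qxy Qxw Qxu Qyx Qyy Qyw Qyu Qwx Qwy Qww Qwu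
              Qux Quy Quw Quu cx cy cw cu c0 ψx ψu P p py pw') →
        pw = -(F.mulVec py) - d) := by
  intro py
  set m : Fin nw → ℝ := -(F.mulVec py) - d with hm
  have hdet : IsUnit Q.det := (Matrix.isUnit_iff_isUnit_det _).1 hQpos.isUnit
  have hz : Q.mulVec m + (Qwy + Qywᵀ + (2 : ℝ) • (Kywᵀ * (1 - Kyy)ᵀ * P * Kyy)).mulVec py
      + q = 0 := by
    rw [hm, hF, hd, Matrix.mulVec_sub, Matrix.mulVec_neg, Matrix.mulVec_mulVec,
      Matrix.mulVec_mulVec, Matrix.mul_nonsing_inv_cancel_left _ _ hdet,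
      Matrix.mul_nonsing_inv _ hdet, Matrix.one_mulVec]
    abel
  have key := fun h => bellmanG_expand_aux Kyy Kyx Kyw Qxx Qxy Qxw Qxu Qyx Qyy Qyw Qyu Qwx Qwy
    Qww Qwu Qux Quy Quw Quu cx cy cw cu c0 ψx ψu P p hQww hP py m h
  rw [← hQ, ← hq, hz] at key
  simp only [dotProduct_zero, add_zero] at key
  have hpos : ∀ h : Fin nw → ℝ, h ≠ 0 → 0 < h ⬝ᵥ Q.mulVec h := by
    intro h hh
    simpa using hQpos.dotProduct_mulVec_pos hh
  refine ⟨fun pw => ?_, fun pw hmin => ?_⟩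
  · have h1 := key (pw - m)
    rw [add_sub_cancel] at h1
    rw [h1]
    rcases eq_or_ne (pw - m) 0 with h0 | h0
    · simp [h0]
    · linarith [hpos _ h0]
  · by_contra hne
    have h1 := key (pw - m)
    rw [add_sub_cancel] at h1
    have h2 := hmin m
    linarith [hpos _ (sub_ne_zero.2 hne)]
end
end

section
/- Suppose the matrix Q = 2Q_ww + 2K_ywᵀ(I − K_yy)ᵀ P (I − K_yy) K_yw is positive definite, and define Φ(ψ_y) = min over ψ_w ∈ ℝ^{n_w} of G(ψ_y, ψ_w), F = Q^{−1} R with R = Q_wy + Q_ywᵀ + 2K_ywᵀ(I − K_yy)ᵀ P K_yy. Then for every ψ_y ∈ ℝ^{n_y}: Φ(ψ_y) + Φ(−ψ_y) − 2Φ(0) = 2 ψ_yᵀ (K_yyᵀ P K_yy − (1/2) Fᵀ Q F + Q_yy) ψ_y; that is, the quadratic part of the minimized Bellman right-hand side is given by the Riccati expression K_yyᵀ P K_yy − (1/2) Fᵀ Q F + Q_yy. -/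
open Matrix Filter

noncomputable section

theorem aux_T {m n : ℕ} (A : Matrix (Fin m) (Fin n) ℝ) (u : Fin n → ℝ) (v : Fin m → ℝ) :
    u ⬝ᵥ Aᵀ.mulVec v = A.mulVec u ⬝ᵥ v := by
  rw [dotProduct_mulVec, vecMul_transpose]

theorem aux_S {n : ℕ} (A : Matrix (Fin n) (Fin n) ℝ) (hA : A.IsSymm) (u v : Fin n → ℝ) :
    u ⬝ᵥ A.mulVec v = v ⬝ᵥ A.mulVec u := by
  conv_lhs => rw [← hA.eq]
  rw [aux_T, dotProduct_comm]

theorem aux_min {n : ℕ} (Q : Matrix (Fin n) (Fin n) ℝ) (hQ : Q.PosDef) (v : Fin n → ℝ) (k : ℝ) :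
    (⨅ w : Fin n → ℝ, ((1 / 2 : ℝ) * (w ⬝ᵥ Q.mulVec w) + w ⬝ᵥ v + k)) =
      k - (1 / 2 : ℝ) * (v ⬝ᵥ Q⁻¹.mulVec v) := by
  have hs : Q.IsSymm := by simpa [IsHermitian, IsSymm] using hQ.isHermitian
  have hu : IsUnit Q.det := (Matrix.isUnit_iff_isUnit_det Q).1 hQ.isUnit
  have hv : Q.mulVec (Q⁻¹.mulVec v) = v := by
    rw [mulVec_mulVec, Matrix.mul_nonsing_inv Q hu, one_mulVec]
  have key : ∀ w : Fin n → ℝ, (1 / 2 : ℝ) * (w ⬝ᵥ Q.mulVec w) + w ⬝ᵥ v + k =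
      (1 / 2 : ℝ) * ((w + Q⁻¹.mulVec v) ⬝ᵥ Q.mulVec (w + Q⁻¹.mulVec v)) +
        (k - (1 / 2 : ℝ) * (v ⬝ᵥ Q⁻¹.mulVec v)) := by
    intro w
    have h1 : Q⁻¹.mulVec v ⬝ᵥ Q.mulVec w = w ⬝ᵥ v := by rw [aux_S Q hs, hv]
    rw [mulVec_add, hv]
    simp only [dotProduct_add, add_dotProduct, h1]
    rw [dotProduct_comm (Q⁻¹.mulVec v) v]
    ring
  have lb : ∀ w : Fin n → ℝ, k - (1 / 2 : ℝ) * (v ⬝ᵥ Q⁻¹.mulVec v) ≤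
      (1 / 2 : ℝ) * (w ⬝ᵥ Q.mulVec w) + w ⬝ᵥ v + k := by
    intro w
    have := hQ.posSemidef.dotProduct_mulVec_nonneg (w + Q⁻¹.mulVec v)
    simp only [star_trivial] at this
    rw [key w]
    linarith
  apply le_antisymm
  · refine (ciInf_le ⟨_, by rintro _ ⟨w, rfl⟩; exact lb w⟩ (-(Q⁻¹.mulVec v))).trans ?_
    rw [key]
    simp
  · exact le_ciInf lb

/-- If `Q = 2Q_ww + 2K_ywᵀ(I − K_yy)ᵀ P (I − K_yy) K_yw` is
positive definite, `Φ(ψ_y) = min_{ψ_w} G(ψ_y, ψ_w)`, and `F = Q⁻¹ R` with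
`R = Q_wy + Q_ywᵀ + 2K_ywᵀ(I − K_yy)ᵀ P K_yy`, then for every `ψ_y`,
`Φ(ψ_y) + Φ(−ψ_y) − 2Φ(0) = 2 ψ_yᵀ (K_yyᵀ P K_yy − (1/2) Fᵀ Q F + Q_yy) ψ_y`:
the quadratic part of the minimized Bellman right-hand side is the Riccati
expression `K_yyᵀ P K_yy − (1/2) Fᵀ Q F + Q_yy`. -/
theorem bellman_quadratic_part {nx ny nw nu : ℕ}
    (Kyy : Matrix (Fin ny) (Fin ny) ℝ) (Kyx : Matrix (Fin ny) (Fin nx) ℝ)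
    (Kyw : Matrix (Fin ny) (Fin nw) ℝ)
    (Qxx : Matrix (Fin nx) (Fin nx) ℝ) (Qxy : Matrix (Fin nx) (Fin ny) ℝ)
    (Qxw : Matrix (Fin nx) (Fin nw) ℝ) (Qxu : Matrix (Fin nx) (Fin nu) ℝ)
    (Qyx : Matrix (Fin ny) (Fin nx) ℝ) (Qyy : Matrix (Fin ny) (Fin ny) ℝ)
    (Qyw : Matrix (Fin ny) (Fin nw) ℝ) (Qyu : Matrix (Fin ny) (Fin nu) ℝ)
    (Qwx : Matrix (Fin nw) (Fin nx) ℝ) (Qwy : Matrix (Fin nw) (Fin ny) ℝ)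
    (Qww : Matrix (Fin nw) (Fin nw) ℝ) (Qwu : Matrix (Fin nw) (Fin nu) ℝ)
    (Qux : Matrix (Fin nu) (Fin nx) ℝ) (Quy : Matrix (Fin nu) (Fin ny) ℝ)
    (Quw : Matrix (Fin nu) (Fin nw) ℝ) (Quu : Matrix (Fin nu) (Fin nu) ℝ)
    (cx : Fin nx → ℝ) (cy : Fin ny → ℝ) (cw : Fin nw → ℝ) (cu : Fin nu → ℝ)
    (c0 : ℝ) (ψx : Fin nx → ℝ) (ψu : Fin nu → ℝ)
    (P : Matrix (Fin ny) (Fin ny) ℝ) (p : Fin ny → ℝ)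
    (hQww : Qww.IsSymm) (hQyy : Qyy.IsSymm) (hP : P.IsSymm)
    (Q : Matrix (Fin nw) (Fin nw) ℝ)
    (hQ : Q = (2 : ℝ) • Qww +
      (2 : ℝ) • (Kywᵀ * (1 - Kyy)ᵀ * P * (1 - Kyy) * Kyw))
    (hQpos : Q.PosDef)
    (F : Matrix (Fin nw) (Fin ny) ℝ)
    (hF : F = Q⁻¹ * (Qwy + Qywᵀ + (2 : ℝ) • (Kywᵀ * (1 - Kyy)ᵀ * P * Kyy)))
    (Φ : (Fin ny → ℝ) → ℝ)
    (hΦ : ∀ py : Fin ny → ℝ,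
      Φ py = ⨅ pw : Fin nw → ℝ,
        bellmanG Kyy Kyx Kyw Qxx Qxy Qxw Qxu Qyx Qyy Qyw Qyu Qwx Qwy Qww Qwu
          Qux Quy Quw Quu cx cy cw cu c0 ψx ψu P p py pw) :
    ∀ py : Fin ny → ℝ,
      Φ py + Φ (-py) - 2 * Φ 0 =
        2 * (py ⬝ᵥ (Kyyᵀ * P * Kyy - (1 / 2 : ℝ) • (Fᵀ * Q * F) + Qyy).mulVec py) := by
  have hs : Q.IsSymm := by simpa [IsHermitian, IsSymm] using hQpos.isHermitian
  have hu : IsUnit Q.det := (Matrix.isUnit_iff_isUnit_det Q).1 hQpos.isUnit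
  obtain ⟨R, hR⟩ : ∃ R, R = Qwy + Qywᵀ + (2 : ℝ) • (Kywᵀ * (1 - Kyy)ᵀ * P * Kyy) := ⟨_, rfl⟩
  rw [← hR] at hF
  obtain ⟨a, ha⟩ : ∃ a, a = Kyx.mulVec ψx - Kyy.mulVec (Kyx.mulVec ψx) := ⟨_, rfl⟩
  obtain ⟨L, hL⟩ : ∃ L, L = (1 - Kyy) * Kyw := ⟨_, rfl⟩
  have hn : ∀ y w, nextY Kyy Kyx Kyw ψx y w = Kyy.mulVec y + L.mulVec w + a := by
    intro y w
    simp only [nextY, ha, hL, mulVec_sub, ← mulVec_mulVec, sub_mulVec, one_mulVec]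
    abel
  have hQ' : Q = (2 : ℝ) • Qww + (2 : ℝ) • (Lᵀ * (P * L)) := by
    rw [hQ, hL, transpose_mul]; simp only [Matrix.mul_assoc]
  have hR' : R = Qwy + Qywᵀ + (2 : ℝ) • (Lᵀ * (P * Kyy)) := by
    rw [hR, hL, transpose_mul]; simp only [Matrix.mul_assoc]
  obtain ⟨b, hb⟩ : ∃ b, b = Qxwᵀ.mulVec ψx + Qwx.mulVec ψx + Qwu.mulVec ψu + Quwᵀ.mulVec ψu + cw
      + (2 : ℝ) • Lᵀ.mulVec (P.mulVec a) + Lᵀ.mulVec p := ⟨_, rfl⟩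
  obtain ⟨d, hd⟩ : ∃ d, d = Qxyᵀ.mulVec ψx + Qyx.mulVec ψx + Qyu.mulVec ψu + Quyᵀ.mulVec ψu + cy
      + (2 : ℝ) • Kyyᵀ.mulVec (P.mulVec a) + Kyyᵀ.mulVec p := ⟨_, rfl⟩
  obtain ⟨e, he⟩ : ∃ e, e = ψx ⬝ᵥ Qxx.mulVec ψx + ψx ⬝ᵥ Qxu.mulVec ψu + ψu ⬝ᵥ Qux.mulVec ψx
      + ψu ⬝ᵥ Quu.mulVec ψu + cx ⬝ᵥ ψx + cu ⬝ᵥ ψu + c0 + a ⬝ᵥ P.mulVec a + p ⬝ᵥ a := ⟨_, rfl⟩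
  have hG : ∀ y w, bellmanG Kyy Kyx Kyw Qxx Qxy Qxw Qxu Qyx Qyy Qyw Qyu Qwx Qwy Qww Qwu
          Qux Quy Quw Quu cx cy cw cu c0 ψx ψu P p y w =
      (1 / 2 : ℝ) * (w ⬝ᵥ Q.mulVec w) + w ⬝ᵥ (R.mulVec y + b) +
        (y ⬝ᵥ (Kyyᵀ * (P * Kyy) + Qyy).mulVec y + y ⬝ᵥ d + e) := by
    intro y w
    simp only [bellmanG, hn, hQ', hR', hb, hd, he, add_mulVec, mulVec_add, smul_mulVec,
      ← mulVec_mulVec, dotProduct_add, add_dotProduct, dotProduct_smul, aux_T, smul_eq_mul]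
    rw [aux_S P hP (Kyy.mulVec y) (L.mulVec w), aux_S P hP a (Kyy.mulVec y),
      aux_S P hP a (L.mulVec w), dotProduct_comm p (Kyy.mulVec y), dotProduct_comm p (L.mulVec w),
      dotProduct_comm cy y, dotProduct_comm cw w, dotProduct_comm (Qxw.mulVec w) ψx,
      dotProduct_comm (Quw.mulVec w) ψu, dotProduct_comm (Qxy.mulVec y) ψx,
      dotProduct_comm (Quy.mulVec y) ψu, dotProduct_comm (Qyw.mulVec w) y]
    ring
  have hmin : ∀ y, Φ y = (y ⬝ᵥ (Kyyᵀ * (P * Kyy) + Qyy).mulVec y + y ⬝ᵥ d + e) -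
      (1 / 2 : ℝ) * ((R.mulVec y + b) ⬝ᵥ Q⁻¹.mulVec (R.mulVec y + b)) := by
    intro y
    rw [hΦ]
    simp only [hG]
    exact aux_min Q hQpos _ _
  intro y
  have hFQ : Fᵀ * Q * F = Rᵀ * (Q⁻¹ * R) := by
    rw [hF, transpose_mul, transpose_nonsing_inv, hs.eq]
    rw [Matrix.mul_assoc, Matrix.mul_assoc, Matrix.mul_nonsing_inv_cancel_left Q _ hu]
  rw [hmin y, hmin (-y), hmin 0, hFQ]
  simp only [add_mulVec, sub_mulVec, mulVec_add, smul_mulVec, mulVec_neg, mulVec_zero,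
      ← mulVec_mulVec, Matrix.mul_assoc, dotProduct_add, dotProduct_sub, add_dotProduct,
      neg_dotProduct, dotProduct_neg, zero_dotProduct, dotProduct_zero,
      dotProduct_smul, aux_T, smul_eq_mul]
  ring
end
end

section
/- Suppose the matrix Q = 2Q_ww + 2K_ywᵀ(I − K_yy)ᵀ P (I − K_yy) K_yw is positive definite; define F = Q^{−1} R with R = Q_wy + Q_ywᵀ + 2K_ywᵀ(I − K_yy)ᵀ P K_yy, and q = (Q_wu + Q_uwᵀ) ψ_u + c_w + K_ywᵀ(I − K_yy)ᵀ p + [2K_ywᵀ(I − K_yy)ᵀ P (I − K_yy) K_yx + Q_wx + Q_xwᵀ] ψ_x. Assume the Riccati equation P = K_yyᵀ P K_yy − (1/2) Fᵀ Q F + Q_yy holds, and that p satisfies (I − K_yy)ᵀ p = −Fᵀ q + (Q_yx + Q_xyᵀ + 2K_yyᵀ P (I − K_yy) K_yx) ψ_x + (Q_yu + Q_uyᵀ) ψ_u + c_y. Then the value function V(ψ_y) = ψ_yᵀ P ψ_y + pᵀ ψ_y satisfies the Bellman equation up to a constant: the function ψ_y ↦ (min over ψ_w of G(ψ_y, ψ_w))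 − V(ψ_y) is constant on ℝ^{n_y}, and the minimum in ψ_w is attained uniquely at ψ_w = −F ψ_y − Q^{−1} q. -/
open Matrix Filter

noncomputable section

theorem dot_transpose_mulVec {m n : ℕ} (A : Matrix (Fin m) (Fin n) ℝ) (v : Fin n → ℝ)
    (w : Fin m → ℝ) : v ⬝ᵥ (Aᵀ *ᵥ w) = (A *ᵥ v) ⬝ᵥ w := by
  rw [Matrix.dotProduct_mulVec, Matrix.vecMul_transpose]

theorem dot_symm_mulVec {n : ℕ} {A : Matrix (Fin n) (Fin n) ℝ} (hA : A.IsSymm)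
    (v w : Fin n → ℝ) : v ⬝ᵥ (A *ᵥ w) = w ⬝ᵥ (A *ᵥ v) := by
  conv_lhs => rw [← hA.eq]
  rw [dot_transpose_mulVec, dotProduct_comm]

/-- Suppose `Q = 2Q_ww + 2K_ywᵀ(I − K_yy)ᵀ P (I − K_yy) K_yw` is
positive definite, `F = Q⁻¹ R` with `R = Q_wy + Q_ywᵀ + 2K_ywᵀ(I − K_yy)ᵀ P K_yy`,
`q = (Q_wu + Q_uwᵀ) ψ_u + c_w + K_ywᵀ(I − K_yy)ᵀ p +
[2K_ywᵀ(I − K_yy)ᵀ P (I − K_yy) K_yx + Q_wx + Q_xwᵀ] ψ_x`, the Riccati equation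
`P = K_yyᵀ P K_yy − (1/2) Fᵀ Q F + Q_yy` holds, and `p` satisfies
`(I − K_yy)ᵀ p = −Fᵀ q + (Q_yx + Q_xyᵀ + 2K_yyᵀ P (I − K_yy) K_yx) ψ_x +
(Q_yu + Q_uyᵀ) ψ_u + c_y`.  Then `V(ψ_y) = ψ_yᵀ P ψ_y + pᵀ ψ_y` satisfies the
Bellman equation up to a constant: `ψ_y ↦ (min_{ψ_w} G(ψ_y, ψ_w)) − V(ψ_y)` is
constant, and the minimum in `ψ_w` is attained uniquely at `ψ_w = −F ψ_y − Q⁻¹ q`. -/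
theorem bellman_value_function {nx ny nw nu : ℕ}
    (Kyy : Matrix (Fin ny) (Fin ny) ℝ) (Kyx : Matrix (Fin ny) (Fin nx) ℝ)
    (Kyw : Matrix (Fin ny) (Fin nw) ℝ)
    (Qxx : Matrix (Fin nx) (Fin nx) ℝ) (Qxy : Matrix (Fin nx) (Fin ny) ℝ)
    (Qxw : Matrix (Fin nx) (Fin nw) ℝ) (Qxu : Matrix (Fin nx) (Fin nu) ℝ)
    (Qyx : Matrix (Fin ny) (Fin nx) ℝ) (Qyy : Matrix (Fin ny) (Fin ny) ℝ)
    (Qyw : Matrix (Fin ny) (Fin nw) ℝ) (Qyu : Matrix (Fin ny) (Fin nu) ℝ)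
    (Qwx : Matrix (Fin nw) (Fin nx) ℝ) (Qwy : Matrix (Fin nw) (Fin ny) ℝ)
    (Qww : Matrix (Fin nw) (Fin nw) ℝ) (Qwu : Matrix (Fin nw) (Fin nu) ℝ)
    (Qux : Matrix (Fin nu) (Fin nx) ℝ) (Quy : Matrix (Fin nu) (Fin ny) ℝ)
    (Quw : Matrix (Fin nu) (Fin nw) ℝ) (Quu : Matrix (Fin nu) (Fin nu) ℝ)
    (cx : Fin nx → ℝ) (cy : Fin ny → ℝ) (cw : Fin nw → ℝ) (cu : Fin nu → ℝ)
    (c0 : ℝ) (ψx : Fin nx → ℝ) (ψu : Fin nu → ℝ)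
    (P : Matrix (Fin ny) (Fin ny) ℝ) (p : Fin ny → ℝ)
    (hQww : Qww.IsSymm) (hQyy : Qyy.IsSymm) (hP : P.IsSymm)
    (Q : Matrix (Fin nw) (Fin nw) ℝ)
    (hQ : Q = (2 : ℝ) • Qww +
      (2 : ℝ) • (Kywᵀ * (1 - Kyy)ᵀ * P * (1 - Kyy) * Kyw))
    (hQpos : Q.PosDef)
    (F : Matrix (Fin nw) (Fin ny) ℝ)
    (hF : F = Q⁻¹ * (Qwy + Qywᵀ + (2 : ℝ) • (Kywᵀ * (1 - Kyy)ᵀ * P * Kyy)))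
    (q : Fin nw → ℝ)
    (hq : q = (Qwu + Quwᵀ).mulVec ψu + cw + (Kywᵀ * (1 - Kyy)ᵀ).mulVec p +
      ((2 : ℝ) • (Kywᵀ * (1 - Kyy)ᵀ * P * (1 - Kyy) * Kyx) + Qwx + Qxwᵀ).mulVec ψx)
    (hRiccati : P = Kyyᵀ * P * Kyy - (1 / 2 : ℝ) • (Fᵀ * Q * F) + Qyy)
    (hp : (1 - Kyy)ᵀ.mulVec p =
      -(Fᵀ.mulVec q) +
        (Qyx + Qxyᵀ + (2 : ℝ) • (Kyyᵀ * P * (1 - Kyy) * Kyx)).mulVec ψx +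
        (Qyu + Quyᵀ).mulVec ψu + cy) :
    (∃ C : ℝ, ∀ py : Fin ny → ℝ,
      (⨅ pw : Fin nw → ℝ,
        bellmanG Kyy Kyx Kyw Qxx Qxy Qxw Qxu Qyx Qyy Qyw Qyu Qwx Qwy Qww Qwu
          Qux Quy Quw Quu cx cy cw cu c0 ψx ψu P p py pw) -
        (py ⬝ᵥ P.mulVec py + p ⬝ᵥ py) = C) ∧
    (∀ py : Fin ny → ℝ,
      (∀ pw : Fin nw → ℝ,
        bellmanG Kyy Kyx Kyw Qxx Qxy Qxw Qxu Qyx Qyy Qyw Qyu Qwx Qwy Qww Qwu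
            Qux Quy Quw Quu cx cy cw cu c0 ψx ψu P p py
            (-(F.mulVec py) - Q⁻¹.mulVec q) ≤
          bellmanG Kyy Kyx Kyw Qxx Qxy Qxw Qxu Qyx Qyy Qyw Qyu Qwx Qwy Qww Qwu
            Qux Quy Quw Quu cx cy cw cu c0 ψx ψu P p py pw) ∧
      (∀ pw : Fin nw → ℝ,
        (∀ pw' : Fin nw → ℝ,
          bellmanG Kyy Kyx Kyw Qxx Qxy Qxw Qxu Qyx Qyy Qyw Qyu Qwx Qwy Qww Qwu
              Qux Quy Quw Quu cx cy cw cu c0 ψx ψu P p py pw ≤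
            bellmanG Kyy Kyx Kyw Qxx Qxy Qxw Qxu Qyx Qyy Qyw Qyu Qwx Qwy Qww Qwu
              Qux Quy Quw Quu cx cy cw cu c0 ψx ψu P p py pw') →
        pw = -(F.mulVec py) - Q⁻¹.mulVec q)) := by
  have hQs : Q.IsSymm := by
    have := hQpos.isHermitian
    rwa [Matrix.IsHermitian, Matrix.conjTranspose_eq_transpose_of_trivial] at this
  have hdet : IsUnit Q.det := (Matrix.isUnit_iff_isUnit_det Q).1 hQpos.isUnit
  have hQF : Q * F = Qwy + Qywᵀ + (2 : ℝ) • (Kywᵀ * (1 - Kyy)ᵀ * P * Kyy) := by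
    rw [hF, Matrix.mul_nonsing_inv_cancel_left _ _ hdet]
  have hQq : Q *ᵥ (Q⁻¹ *ᵥ q) = q := by
    rw [Matrix.mulVec_mulVec, Matrix.mul_nonsing_inv _ hdet, Matrix.one_mulVec]
  have hnext : ∀ py pw, nextY Kyy Kyx Kyw ψx py pw = Kyy *ᵥ py +
      (1 - Kyy) *ᵥ (Kyx *ᵥ ψx) + (1 - Kyy) *ᵥ (Kyw *ᵥ pw) := by
    intro py pw
    simp only [nextY, Matrix.mulVec_sub, Matrix.sub_mulVec, Matrix.one_mulVec]
    abel
  have hM : ∀ y, p ⬝ᵥ y - p ⬝ᵥ (Kyy *ᵥ y) = y ⬝ᵥ ((1 - Kyy)ᵀ *ᵥ p) := by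
    intro y
    rw [dot_transpose_mulVec, Matrix.sub_mulVec, Matrix.one_mulVec, sub_dotProduct,
      dotProduct_comm p, dotProduct_comm p]
  generalize 1 - Kyy = M at *
  have E1 : ∀ w, w ⬝ᵥ (Q *ᵥ w) = 2 * (w ⬝ᵥ (Qww *ᵥ w)) +
      2 * ((M *ᵥ (Kyw *ᵥ w)) ⬝ᵥ (P *ᵥ (M *ᵥ (Kyw *ᵥ w)))) := by
    intro w
    rw [hQ]
    simp only [Matrix.add_mulVec, Matrix.smul_mulVec, dotProduct_add, dotProduct_smul,
      ← Matrix.mulVec_mulVec, dot_transpose_mulVec, smul_eq_mul]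
  have E2 : ∀ w y, w ⬝ᵥ (Q *ᵥ (F *ᵥ y)) = w ⬝ᵥ (Qwy *ᵥ y) + y ⬝ᵥ (Qyw *ᵥ w) +
      2 * ((M *ᵥ (Kyw *ᵥ w)) ⬝ᵥ (P *ᵥ (Kyy *ᵥ y))) := by
    intro w y
    rw [Matrix.mulVec_mulVec, hQF]
    simp only [Matrix.add_mulVec, Matrix.smul_mulVec, dotProduct_add, dotProduct_smul,
      ← Matrix.mulVec_mulVec, dot_transpose_mulVec, smul_eq_mul]
    rw [dotProduct_comm y]
  have E3 : ∀ w, w ⬝ᵥ q = w ⬝ᵥ (Qwu *ᵥ ψu) + ψu ⬝ᵥ (Quw *ᵥ w) + cw ⬝ᵥ w +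
      p ⬝ᵥ (M *ᵥ (Kyw *ᵥ w)) +
      2 * ((M *ᵥ (Kyw *ᵥ w)) ⬝ᵥ (P *ᵥ (M *ᵥ (Kyx *ᵥ ψx)))) +
      w ⬝ᵥ (Qwx *ᵥ ψx) + ψx ⬝ᵥ (Qxw *ᵥ w) := by
    intro w
    rw [hq]
    simp only [Matrix.add_mulVec, Matrix.smul_mulVec, dotProduct_add, dotProduct_smul,
      ← Matrix.mulVec_mulVec, dot_transpose_mulVec, smul_eq_mul]
    rw [dotProduct_comm ψu, dotProduct_comm cw, dotProduct_comm p, dotProduct_comm ψx]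
    ring
  have E4 : ∀ y, y ⬝ᵥ (P *ᵥ y) = (Kyy *ᵥ y) ⬝ᵥ (P *ᵥ (Kyy *ᵥ y)) -
      (1 / 2) * ((F *ᵥ y) ⬝ᵥ (Q *ᵥ (F *ᵥ y))) + y ⬝ᵥ (Qyy *ᵥ y) := by
    intro y
    conv_lhs => rw [hRiccati]
    simp only [Matrix.add_mulVec, Matrix.sub_mulVec, Matrix.smul_mulVec, dotProduct_add,
      dotProduct_sub, dotProduct_smul,
      ← Matrix.mulVec_mulVec, dot_transpose_mulVec, smul_eq_mul]
  have E5 : ∀ y, p ⬝ᵥ y - p ⬝ᵥ (Kyy *ᵥ y) = -((F *ᵥ y) ⬝ᵥ q) + y ⬝ᵥ (Qyx *ᵥ ψx) +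
      ψx ⬝ᵥ (Qxy *ᵥ y) + 2 * ((Kyy *ᵥ y) ⬝ᵥ (P *ᵥ (M *ᵥ (Kyx *ᵥ ψx)))) +
      y ⬝ᵥ (Qyu *ᵥ ψu) + ψu ⬝ᵥ (Quy *ᵥ y) + cy ⬝ᵥ y := by
    intro y
    rw [hM, hp]
    simp only [Matrix.add_mulVec, Matrix.smul_mulVec, dotProduct_add, dotProduct_smul,
      dotProduct_neg,
      ← Matrix.mulVec_mulVec, dot_transpose_mulVec, smul_eq_mul]
    rw [dotProduct_comm ψu, dotProduct_comm cy, dotProduct_comm ψx]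
    ring
  have key : ∃ C : ℝ, ∀ py pw, bellmanG Kyy Kyx Kyw Qxx Qxy Qxw Qxu Qyx Qyy Qyw Qyu Qwx Qwy Qww Qwu
        Qux Quy Quw Quu cx cy cw cu c0 ψx ψu P p py pw =
      py ⬝ᵥ P.mulVec py + p ⬝ᵥ py + C +
      (1 / 2) * ((pw - (-(F.mulVec py) - Q⁻¹.mulVec q)) ⬝ᵥ
        (Q *ᵥ (pw - (-(F.mulVec py) - Q⁻¹.mulVec q)))) := by
    refine ⟨ψx ⬝ᵥ Qxx.mulVec ψx + ψx ⬝ᵥ Qxu.mulVec ψu + ψu ⬝ᵥ Qux.mulVec ψx +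
      ψu ⬝ᵥ Quu.mulVec ψu + cx ⬝ᵥ ψx + cu ⬝ᵥ ψu + c0 +
      (M *ᵥ (Kyx *ᵥ ψx)) ⬝ᵥ (P *ᵥ (M *ᵥ (Kyx *ᵥ ψx))) + p ⬝ᵥ (M *ᵥ (Kyx *ᵥ ψx)) -
      (1 / 2) * ((Q⁻¹ *ᵥ q) ⬝ᵥ q), ?_⟩
    intro y w
    have e1 := E1 w
    have e2 := E2 w y
    have e3 := E3 w
    have e4 := E4 y
    have e5 := E5 y
    have hz : w - (-(F *ᵥ y) - Q⁻¹ *ᵥ q) = w + F *ᵥ y + Q⁻¹ *ᵥ q := by abel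
    have s1 := dot_symm_mulVec hQs (F *ᵥ y) w
    have s2 := dot_symm_mulVec hQs (Q⁻¹ *ᵥ q) w
    have s3 := dot_symm_mulVec hQs (Q⁻¹ *ᵥ q) (F *ᵥ y)
    rw [hQq] at s2 s3
    have s4 := dot_symm_mulVec hP (Kyy *ᵥ y) (M *ᵥ (Kyx *ᵥ ψx))
    have s5 := dot_symm_mulVec hP (Kyy *ᵥ y) (M *ᵥ (Kyw *ᵥ w))
    have s6 := dot_symm_mulVec hP (M *ᵥ (Kyx *ᵥ ψx)) (M *ᵥ (Kyw *ᵥ w))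
    rw [hz, bellmanG, hnext]
    simp only [Matrix.mulVec_add, dotProduct_add, add_dotProduct, hQq]
    linarith
  obtain ⟨C, hC⟩ := key
  have hpos : ∀ z : Fin nw → ℝ, z ≠ 0 → 0 < z ⬝ᵥ (Q *ᵥ z) := by
    intro z hz
    simpa using hQpos.dotProduct_mulVec_pos hz
  have hnn : ∀ z : Fin nw → ℝ, 0 ≤ z ⬝ᵥ (Q *ᵥ z) := by
    intro z
    rcases eq_or_ne z 0 with rfl | hz
    · simp
    · exact (hpos z hz).le
  have hmin : ∀ py pw, bellmanG Kyy Kyx Kyw Qxx Qxy Qxw Qxu Qyx Qyy Qyw Qyu Qwx Qwy Qww Qwu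
        Qux Quy Quw Quu cx cy cw cu c0 ψx ψu P p py (-(F.mulVec py) - Q⁻¹.mulVec q) ≤ bellmanG Kyy Kyx Kyw Qxx Qxy Qxw Qxu Qyx Qyy Qyw Qyu Qwx Qwy Qww Qwu
        Qux Quy Quw Quu cx cy cw cu c0 ψx ψu P p py pw := by
    intro py pw
    rw [hC, hC py pw, sub_self, zero_dotProduct]
    linarith [hnn (pw - (-(F.mulVec py) - Q⁻¹.mulVec q))]
  refine ⟨⟨C, fun py => ?_⟩, fun py => ⟨hmin py, fun pw h => ?_⟩⟩
  · have hinf : (⨅ pw : Fin nw → ℝ, bellmanG Kyy Kyx Kyw Qxx Qxy Qxw Qxu Qyx Qyy Qyw Qyu Qwx Qwy Qww Qwu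
        Qux Quy Quw Quu cx cy cw cu c0 ψx ψu P p py pw) =
        bellmanG Kyy Kyx Kyw Qxx Qxy Qxw Qxu Qyx Qyy Qyw Qyu Qwx Qwy Qww Qwu
        Qux Quy Quw Quu cx cy cw cu c0 ψx ψu P p py (-(F.mulVec py) - Q⁻¹.mulVec q) := by
      apply le_antisymm
      · exact ciInf_le ⟨_, by rintro _ ⟨pw, rfl⟩; exact hmin py pw⟩ _
      · exact le_ciInf (hmin py)
    rw [hinf, hC, sub_self, zero_dotProduct]
    ring
  · by_contra hne
    have h1 := h (-(F.mulVec py) - Q⁻¹.mulVec q)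
    have h2 := hpos _ (sub_ne_zero.2 hne)
    rw [hC, hC py (-(F.mulVec py) - Q⁻¹.mulVec q), sub_self (-(F.mulVec py) - Q⁻¹.mulVec q),
      zero_dotProduct] at h1
    linarith
end
end
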